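/- Let G = (V,E) be a finite simple graph, let x : E → [0,1] be a fractional matching of G, let 0 < β ≤ 1/2, and let C̃ ⊆ V be a set of vertices such that every v ∈ C̃ satisfies ∑_{e ∋ v} x_e ≥ 1 - β. Then in the randomized rounding process, with probability at least 1 - 2·exp(-|C̃|/5000), the number of good edges satisfies f(X) ≥ |C̃|/50; in particular, with this probability the process yields a matching of G of size at least |C̃|/50. -/

import Mathlib

open Finset

variable {V : Type*}

/-- The probability weight of a configuration `X` of the randomized rounding process: each
vertex `v ∈ C̃` independently picks a neighbor `u` with probability `x_{{u,v}}/10`, and picks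
`⋆` (encoded as `none`) with probability `1 - (∑_{e ∋ v} x_e)/10`. -/
noncomputable def roundWeight [Fintype V] [DecidableEq V] (G : SimpleGraph V)
    [DecidableRel G.Adj] (x : Sym2 V → ℝ) (Ct : Finset V)
    (X : {v // v ∈ Ct} → Option V) : ℝ :=
  ∏ v : {v // v ∈ Ct},
    match X v with
    | none => 1 - (∑ e ∈ G.edgeFinset.filter (fun e => v.1 ∈ e), x e) / 10
    | some u => if G.Adj v.1 u then x s(v.1, u) / 10 else 0

/-- The (multi)set of edges `H_X = {{v, X_v} : v ∈ C̃, X_v ≠ ⋆}` proposed by a configuration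
`X` of the randomized rounding process. -/
def proposedEdges [DecidableEq V] (Ct : Finset V)
    (X : {v // v ∈ Ct} → Option V) : Finset (Sym2 V) :=
  (Finset.univ.filter (fun v : {v // v ∈ Ct} => (X v).isSome)).image
    (fun v => s(v.1, (X v).getD v.1))

/-- `f(X)`: the number of good edges of `H_X`, i.e. edges of `H_X` sharing no endpoint with
any other edge of `H_X`. The good edges form a matching. -/
def goodCount [Fintype V] [DecidableEq V] (Ct : Finset V)
    (X : {v // v ∈ Ct} → Option V) : ℕ :=
  ((proposedEdges Ct X).filter (fun e =>
    ∀ f ∈ proposedEdges Ct X, f ≠ e → ∀ w : V, w ∈ e → w ∉ f)).card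


section BoundedDifferences

/-- Hoeffding's lemma for a finitely supported probability distribution. -/
theorem sum_mul_exp_le_of_sub_le {α : Type*} [Fintype α] (p m : α → ℝ) (hp : ∀ a, 0 ≤ p a)
    (hp1 : ∑ a, p a = 1) (c : ℝ) (hm : ∀ a b, m a - m b ≤ c) (t : ℝ) :
    ∑ a, p a * Real.exp (t * m a) ≤
      Real.exp (t * ∑ a, p a * m a + c ^ 2 * t ^ 2 / 8) := by
  classical
  let _ : MeasurableSpace α := ⊤
  have hsum : ∑ a, ENNReal.ofReal (p a) = 1 := by
    rw [← ENNReal.ofReal_sum_of_nonneg fun a _ => hp a, hp1, ENNReal.ofReal_one]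
  let P : PMF α := PMF.ofFintype (fun a => ENNReal.ofReal (p a)) hsum
  have hint : ∀ g : α → ℝ, ∫ a, g a ∂P.toMeasure = ∑ a, p a * g a := by
    intro g
    rw [PMF.integral_eq_sum]
    exact Finset.sum_congr rfl fun a _ => by
      simp [P, PMF.ofFintype_apply, ENNReal.toReal_ofReal (hp a)]
  have hne : Nonempty α := by
    by_contra h
    rw [not_nonempty_iff] at h
    simp at hp1
  obtain ⟨a₀, ha₀⟩ := Finite.exists_min m
  have hc : 0 ≤ c := by simpa using hm a₀ a₀
  have key := (ProbabilityTheory.hasSubgaussianMGF_of_mem_Icc (μ := P.toMeasure) (X := m)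
    (a := m a₀) (b := m a₀ + c) (measurable_of_finite m).aemeasurable
    (Filter.Eventually.of_forall fun a => ⟨ha₀ a, by linarith [hm a a₀]⟩)).mgf_le t
  rw [ProbabilityTheory.mgf, hint, hint] at key
  have hcoe : (((‖m a₀ + c - m a₀‖₊ / 2) ^ 2 : NNReal) : ℝ) = c ^ 2 / 4 := by
    push_cast
    rw [add_sub_cancel_left, Real.norm_of_nonneg hc]
    ring
  rw [hcoe] at key
  calc ∑ a, p a * Real.exp (t * m a)
      = Real.exp (t * ∑ a, p a * m a) *
          ∑ a, p a * Real.exp (t * (m a - ∑ a, p a * m a)) := by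
        rw [Finset.mul_sum]
        refine Finset.sum_congr rfl fun a _ => ?_
        rw [mul_left_comm, ← Real.exp_add]
        ring_nf
    _ ≤ Real.exp (t * ∑ a, p a * m a) * Real.exp (c ^ 2 / 4 * t ^ 2 / 2) := by gcongr
    _ = _ := by
        rw [← Real.exp_add]
        ring_nf

theorem sum_prod_apply_eq_one {ι α : Type*} [Fintype ι] [DecidableEq ι] [Fintype α]
    (p : ι → α → ℝ) (hp1 : ∀ i, ∑ a, p i a = 1) : ∑ X : ι → α, ∏ i, p i (X i) = 1 := by
  rw [← Fintype.piFinset_univ, ← Finset.prod_univ_sum]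
  simp [hp1]

theorem sum_fin_cons_eq {α : Type*} [Fintype α] {n : ℕ} (g : (Fin (n + 1) → α) → ℝ) :
    ∑ X, g X = ∑ a, ∑ Y : Fin n → α, g (Fin.cons a Y) := by
  rw [← Fintype.sum_prod_type']
  exact (Fintype.sum_equiv (Fin.consEquiv fun _ => α) _ _ fun _ => rfl).symm

theorem sum_prod_mul_exp_le_fin {α : Type*} [Fintype α] (c t : ℝ) :
    ∀ (n : ℕ) (p : Fin n → α → ℝ) (_ : ∀ i a, 0 ≤ p i a) (_ : ∀ i, ∑ a, p i a = 1)
      (f : (Fin n → α) → ℝ)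
      (_ : ∀ X Y i, (∀ j, j ≠ i → X j = Y j) → f X - f Y ≤ c),
      ∑ X, (∏ i, p i (X i)) * Real.exp (t * f X) ≤
        Real.exp (t * (∑ X, (∏ i, p i (X i)) * f X) + n * (c ^ 2 * t ^ 2 / 8))
  | 0, p, _, _, f, _ => by simp
  | n + 1, p, hp, hp1, f, hf => by
    let q : Fin n → α → ℝ := fun i => p i.succ
    let m : α → ℝ := fun a => ∑ Y : Fin n → α, (∏ i, q i (Y i)) * f (Fin.cons a Y)
    have ih : ∀ a, ∑ Y : Fin n → α, (∏ i, q i (Y i)) * Real.exp (t * f (Fin.cons a Y)) ≤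
        Real.exp (t * m a + n * (c ^ 2 * t ^ 2 / 8)) := fun a =>
      sum_prod_mul_exp_le_fin c t n q (fun i => hp i.succ) (fun i => hp1 i.succ)
        (fun Y => f (Fin.cons a Y)) fun X Y i h => hf _ _ i.succ fun j hj => by
          cases j using Fin.cases with
          | zero => rfl
          | succ k => simpa using h k fun e => hj (by rw [e])
    have hm : ∀ a b, m a - m b ≤ c := fun a b => by
      simp only [m]
      rw [← Finset.sum_sub_distrib]
      calc _ ≤ ∑ Y : Fin n → α, (∏ i, q i (Y i)) * c := by
            refine Finset.sum_le_sum fun Y _ => ?_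
            rw [← mul_sub]
            refine mul_le_mul_of_nonneg_left (hf _ _ 0 fun j hj => ?_)
              (Finset.prod_nonneg fun i _ => hp _ _)
            obtain ⟨k, rfl⟩ := Fin.exists_succ_eq.2 hj
            simp
        _ = c := by
            rw [← Finset.sum_mul, sum_prod_apply_eq_one q fun i => hp1 i.succ, one_mul]
    rw [sum_fin_cons_eq, sum_fin_cons_eq]
    simp only [Fin.prod_univ_succ, Fin.cons_zero, Fin.cons_succ, mul_assoc, ← Finset.mul_sum]
    calc _ ≤ ∑ a, p 0 a * Real.exp (t * m a + n * (c ^ 2 * t ^ 2 / 8)) :=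
          Finset.sum_le_sum fun a _ => mul_le_mul_of_nonneg_left (ih a) (hp 0 a)
      _ = (∑ a, p 0 a * Real.exp (t * m a)) * Real.exp (n * (c ^ 2 * t ^ 2 / 8)) := by
          rw [Finset.sum_mul]
          exact Finset.sum_congr rfl fun a _ => by rw [Real.exp_add, mul_assoc]
      _ ≤ Real.exp (t * ∑ a, p 0 a * m a + c ^ 2 * t ^ 2 / 8) *
            Real.exp (n * (c ^ 2 * t ^ 2 / 8)) := by
          gcongr
          exact sum_mul_exp_le_of_sub_le (p 0) m (hp 0) (hp1 0) c hm t
      _ = _ := by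
          rw [← Real.exp_add]
          push_cast
          congr 1
          simp only [m, q]
          ring

/-- The moment generating function bound behind McDiarmid's inequality, for finite product
distributions. -/
theorem sum_prod_mul_exp_le {ι α : Type*} [Fintype ι] [DecidableEq ι] [Fintype α]
    (p : ι → α → ℝ) (hp : ∀ i a, 0 ≤ p i a) (hp1 : ∀ i, ∑ a, p i a = 1)
    (f : (ι → α) → ℝ) (c : ℝ)
    (hf : ∀ X Y i, (∀ j, j ≠ i → X j = Y j) → f X - f Y ≤ c) (t : ℝ) :
    ∑ X, (∏ i, p i (X i)) * Real.exp (t * f X) ≤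
      Real.exp (t * (∑ X, (∏ i, p i (X i)) * f X) + Fintype.card ι * (c ^ 2 * t ^ 2 / 8)) := by
  let e := Fintype.equivFin ι
  have hsum : ∀ g : (ι → α) → ℝ, ∑ X, (∏ i, p i (X i)) * g X =
      ∑ Y : Fin (Fintype.card ι) → α, (∏ i, p (e.symm i) (Y i)) * g (Y ∘ e) := fun g => by
    refine Fintype.sum_equiv (e.arrowCongr (Equiv.refl α)) _ _ fun X => ?_
    congr 1
    · exact Fintype.prod_equiv e _ _ fun i => by simp
    · congr 1
      ext i
      simp
  rw [hsum, hsum]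
  refine sum_prod_mul_exp_le_fin c t _ _ (fun i => hp _) (fun i => hp1 _) (fun Y => f (Y ∘ e))
    fun X Y i h => hf _ _ (e.symm i) fun j hj => h _ fun h' => hj ?_
  rw [← h', e.symm_apply_apply]

/-- Lower tail form of McDiarmid's inequality for finite product distributions, with a free
exponential parameter `t`. -/
theorem sum_filter_lt_prod_le {ι α : Type*} [Fintype ι] [DecidableEq ι] [Fintype α]
    (p : ι → α → ℝ) (hp : ∀ i a, 0 ≤ p i a) (hp1 : ∀ i, ∑ a, p i a = 1)
    (f : (ι → α) → ℝ) (c : ℝ)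
    (hf : ∀ X Y i, (∀ j, j ≠ i → X j = Y j) → f X - f Y ≤ c) (s t : ℝ) (ht : 0 ≤ t) :
    ∑ X with f X < s, ∏ i, p i (X i) ≤
      Real.exp (t * (s - ∑ X, (∏ i, p i (X i)) * f X) +
        Fintype.card ι * (c ^ 2 * t ^ 2 / 8)) := by
  have hw : ∀ X : ι → α, 0 ≤ ∏ i, p i (X i) := fun X => Finset.prod_nonneg fun i _ => hp _ _
  calc ∑ X with f X < s, ∏ i, p i (X i)
      ≤ ∑ X with f X < s, Real.exp (t * s) * ((∏ i, p i (X i)) * Real.exp (-t * f X)) := by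
        refine Finset.sum_le_sum fun X hX => ?_
        rw [mul_left_comm, ← Real.exp_add]
        refine le_mul_of_one_le_right (hw X) (Real.one_le_exp ?_)
        have := (Finset.mem_filter.1 hX).2
        nlinarith
    _ ≤ ∑ X, Real.exp (t * s) * ((∏ i, p i (X i)) * Real.exp (-t * f X)) :=
        Finset.sum_le_sum_of_subset_of_nonneg (Finset.filter_subset _ _) fun X _ _ =>
          mul_nonneg (Real.exp_pos _).le (mul_nonneg (hw X) (Real.exp_pos _).le)
    _ ≤ Real.exp (t * s) * Real.exp (-t * (∑ X, (∏ i, p i (X i)) * f X) +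
          Fintype.card ι * (c ^ 2 * (-t) ^ 2 / 8)) := by
        rw [← Finset.mul_sum]
        gcongr
        exact sum_prod_mul_exp_le p hp hp1 f c hf (-t)
    _ = _ := by
        rw [← Real.exp_add]
        ring_nf

end BoundedDifferences

section Isolated

/-- Vertex `w` is an endpoint of the edge `{v, o}` proposed by the vertex `v` choosing `o`. -/
def Touches (v : V) (o : Option V) (w : V) : Prop :=
  o.isSome ∧ (w = v ∨ o = some w)

open Classical in
/-- The vertices whose proposed edge is disjoint from the edges proposed by all other vertices. -/
noncomputable def isolatedProposers (Ct : Finset V) (X : {v // v ∈ Ct} → Option V) :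
    Finset {v // v ∈ Ct} :=
  {i | (X i).isSome ∧ ∀ j, j ≠ i → ∀ w, Touches i.1 (X i) w → ¬ Touches j.1 (X j) w}

variable {Ct : Finset V} {X Y : {v // v ∈ Ct} → Option V}

theorem mem_isolatedProposers {i : {v // v ∈ Ct}} :
    i ∈ isolatedProposers Ct X ↔
      (X i).isSome ∧ ∀ j, j ≠ i → ∀ w, Touches i.1 (X i) w → ¬ Touches j.1 (X j) w := by
  simp [isolatedProposers]

theorem eq_of_mem_isolatedProposers {i j : {v // v ∈ Ct}} {w : V}
    (hi : i ∈ isolatedProposers Ct X) (hwi : Touches i.1 (X i) w) (hwj : Touches j.1 (X j) w) :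
    i = j := by
  by_contra h
  exact (mem_isolatedProposers.1 hi).2 j (fun e => h e.symm) w hwi hwj

theorem card_isolatedProposers_sub_le {i : {v // v ∈ Ct}} (h : ∀ j, j ≠ i → X j = Y j) :
    ((isolatedProposers Ct X).card : ℝ) - (isolatedProposers Ct Y).card ≤ 2 := by
  classical
  let T : V → Finset {v // v ∈ Ct} := fun w =>
    {k ∈ isolatedProposers Ct X | Touches k.1 (X k) w}
  have hT : ∀ w, (T w).card ≤ 1 := fun w => Finset.card_le_one.2 fun a ha b hb => by
    rw [Finset.mem_filter] at ha hb
    exact eq_of_mem_isolatedProposers ha.1 ha.2 hb.2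
  have hsub : isolatedProposers Ct X ⊆
      isolatedProposers Ct Y ∪ (T i.1 ∪ T ((Y i).getD i.1)) := fun k hk => by
    by_contra hn
    simp only [Finset.mem_union, not_or, T, Finset.mem_filter, hk, true_and] at hn
    obtain ⟨hnY, hni, hnu⟩ := hn
    have hX := mem_isolatedProposers.1 hk
    have hki : k ≠ i := by
      rintro rfl
      exact hni ⟨hX.1, Or.inl rfl⟩
    refine hnY (mem_isolatedProposers.2 ⟨h k hki ▸ hX.1, fun j hj w hw hjw => ?_⟩)
    rw [← h k hki] at hw
    by_cases hji : j = i
    · subst hji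
      obtain ⟨-, rfl | hw'⟩ := hjw
      · exact hni hw
      · rw [hw'] at hnu
        exact hnu hw
    · exact hX.2 j hj w hw (h j hji ▸ hjw)
  have h1 := Finset.card_le_card hsub
  have h2 := Finset.card_union_le (isolatedProposers Ct Y) (T i.1 ∪ T ((Y i).getD i.1))
  have h3 := Finset.card_union_le (T i.1) (T ((Y i).getD i.1))
  have h4 := hT i.1
  have h5 := hT ((Y i).getD i.1)
  have h6 : (isolatedProposers Ct X).card ≤ (isolatedProposers Ct Y).card + 2 := by omega
  have h7 : ((isolatedProposers Ct X).card : ℝ) ≤ (isolatedProposers Ct Y).card + 2 := by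
    exact_mod_cast h6
  linarith

theorem mem_mk_getD_iff {v w : V} {o : Option V} (ho : o.isSome) :
    w ∈ s(v, o.getD v) ↔ Touches v o w := by
  obtain ⟨u, rfl⟩ := Option.isSome_iff_exists.1 ho
  simp [Touches, eq_comm]

theorem card_isolatedProposers_le_goodCount [Fintype V] [DecidableEq V] :
    (isolatedProposers Ct X).card ≤ goodCount Ct X := by
  refine Finset.card_le_card_of_injOn (fun i => s(i.1, (X i).getD i.1)) ?_ ?_
  · intro i hi
    have hX := mem_isolatedProposers.1 hi
    simp only [proposedEdges, Finset.coe_filter, Set.mem_ofPred_eq, Finset.mem_image,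
      Finset.mem_filter, Finset.mem_univ, true_and]
    refine ⟨⟨i, hX.1, rfl⟩, ?_⟩
    rintro _ ⟨j, hj, rfl⟩ hne w hw hw'
    rw [mem_mk_getD_iff hX.1] at hw
    rw [mem_mk_getD_iff hj] at hw'
    exact hne (by rw [eq_of_mem_isolatedProposers hi hw hw'])
  · intro i hi j hj hij
    have hX := mem_isolatedProposers.1 hi
    have hX' := mem_isolatedProposers.1 hj
    refine eq_of_mem_isolatedProposers hi (w := i.1) ⟨hX.1, Or.inl rfl⟩ ?_
    rw [← mem_mk_getD_iff hX'.1]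
    have hij' : s(i.1, (X i).getD i.1) = s(j.1, (X j).getD j.1) := hij
    exact hij' ▸ Sym2.mem_mk_left _ _

end Isolated

section Expectation

/-- The distribution of the choice of the vertex `v`, in terms of the edge weights `y v u`. -/
noncomputable def proposalProb [Fintype V] (y : V → V → ℝ) (v : V) : Option V → ℝ
  | none => 1 - (∑ u, y v u) / 10
  | some u => y v u / 10

theorem sum_proposalProb [Fintype V] (y : V → V → ℝ) (v : V) :
    ∑ o, proposalProb y v o = 1 := by
  simp [Fintype.sum_option, proposalProb, Finset.sum_div]

theorem proposalProb_nonneg [Fintype V] {y : V → V → ℝ} (hy : ∀ v u, 0 ≤ y v u)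
    (hy1 : ∀ v, ∑ u, y v u ≤ 1) (v : V) (o : Option V) : 0 ≤ proposalProb y v o := by
  cases o with
  | none =>
    have := hy1 v
    simp only [proposalProb]
    linarith
  | some u => exact div_nonneg (hy v u) (by norm_num)

theorem one_sub_sum_le_prod_of_one_sub_le {ι : Type*} (s : Finset ι) (a t : ι → ℝ)
    (h0 : ∀ i ∈ s, 0 ≤ a i) (h1 : ∀ i ∈ s, a i ≤ 1) (h : ∀ i ∈ s, 1 - t i ≤ a i) :
    1 - ∑ i ∈ s, t i ≤ ∏ i ∈ s, a i := by
  classical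
  induction s using Finset.induction_on with
  | empty => simp
  | insert i s hi ih =>
    rw [Finset.sum_insert hi, Finset.prod_insert hi]
    simp only [Finset.mem_insert, forall_eq_or_imp] at h0 h1 h
    have := ih h0.2 h1.2 h.2
    have hP := Finset.prod_le_one h0.2 h1.2
    nlinarith [mul_nonneg (sub_nonneg.2 h1.1) (sub_nonneg.2 hP)]

variable [Fintype V] {y : V → V → ℝ} {Ct : Finset V}

open Classical in
/-- Each other vertex `w` avoids both endpoints of `{v, u}` with large probability. -/
theorem one_sub_le_sum_proposalProb_not_touches (hy : ∀ v u, 0 ≤ y v u) {v u w : V}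
    (hw : w ≠ v) :
    1 - ((if w = u then (∑ b, y u b) / 10 else 0) + (y w v + y w u) / 10) ≤
      ∑ o, proposalProb y w o * (if ¬ Touches w o v ∧ ¬ Touches w o u then 1 else 0) := by
  refine sub_le_comm.1 ((sub_le_sub_right (sum_proposalProb y w).ge _).trans ?_)
  rw [← Finset.sum_sub_distrib]
  have hnone : ∀ z, ¬ Touches w none z := fun z h => by simp [Touches] at h
  rw [Fintype.sum_option]
  simp only [hnone, not_false_eq_true, and_self, if_true, mul_one, sub_self, zero_add]
  calc _ ≤ ∑ b, y w b / 10 * ((if w = u then 1 else 0) + (if b = v then 1 else 0) +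
        (if b = u then 1 else 0)) := by
        refine Finset.sum_le_sum fun b _ => ?_
        simp only [proposalProb]
        rw [← mul_one_sub]
        refine mul_le_mul_of_nonneg_left ?_ (div_nonneg (hy w b) (by norm_num))
        simp only [Touches, Option.isSome_some, true_and, Option.some.injEq, not_or]
        by_cases h1 : w = u <;> by_cases h2 : b = v <;> by_cases h3 : b = u <;>
          simp_all [eq_comm]
    _ = _ := by
        simp only [mul_add, Finset.sum_add_distrib, mul_ite, mul_one, mul_zero]
        split_ifs with h
        · subst h
          simp [Finset.sum_div]
          ring
        · simp
          ring

theorem mul_le_sum_prod_mul_isolated (hy : ∀ v u, 0 ≤ y v u) (hs : ∀ v u, y v u = y u v)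
    (hy1 : ∀ v, ∑ u, y v u ≤ 1) [DecidableEq V] (i : {v // v ∈ Ct}) :
    ∑ u, y i.1 u / 10 * (1 - ((if u ∈ Ct then (∑ b, y u b) / 10 else 0) +
        ((∑ b, y i.1 b) + ∑ b, y u b) / 10)) ≤
      ∑ X : {v // v ∈ Ct} → Option V, (∏ j, proposalProb y j.1 (X j)) *
        (if i ∈ isolatedProposers Ct X then 1 else 0) := by
  classical
  let A : V → {v // v ∈ Ct} → Option V → Prop := fun u j o =>
    if j = i then o = some u else ¬ Touches j.1 o i.1 ∧ ¬ Touches j.1 o u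
  have hp := proposalProb_nonneg hy hy1
  calc _ ≤ ∑ u, ∏ j : {v // v ∈ Ct}, ∑ o, proposalProb y j.1 o * (if A u j o then 1 else 0) := by
        refine Finset.sum_le_sum fun u _ => ?_
        rw [← Finset.mul_prod_erase _ _ (Finset.mem_univ i)]
        have hi : ∑ o, proposalProb y i.1 o * (if A u i o then 1 else 0) = y i.1 u / 10 := by
          simp [A, proposalProb]
        rw [hi]
        refine mul_le_mul_of_nonneg_left ?_ (div_nonneg (hy _ _) (by norm_num))
        let t : V → ℝ := fun w =>
          (if w = u then (∑ b, y u b) / 10 else 0) + (y w i.1 + y w u) / 10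
        refine le_trans ?_ (one_sub_sum_le_prod_of_one_sub_le _ _ (fun j => t j.1)
          (fun j _ => Finset.sum_nonneg fun o _ => mul_nonneg (hp _ _) (by positivity))
          (fun j _ => ?_) fun j hj => ?_)
        · refine sub_le_sub_left ?_ _
          have hS : ∀ v, 0 ≤ ∑ b, y v b := fun v => Finset.sum_nonneg fun b _ => hy v b
          calc ∑ j ∈ Finset.univ.erase i, t j.1 ≤ ∑ j : {v // v ∈ Ct}, t j.1 :=
                Finset.sum_le_sum_of_subset_of_nonneg (Finset.erase_subset _ _) fun j _ _ => by
                  have h1 := hy j.1 i.1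
                  have h2 := hy j.1 u
                  have h3 := hS u
                  simp only [t]
                  positivity
            _ = ∑ w ∈ Ct, t w := Finset.sum_coe_sort Ct t
            _ = (if u ∈ Ct then (∑ b, y u b) / 10 else 0) +
                  ∑ w ∈ Ct, (y w i.1 + y w u) / 10 := by
                simp [t, Finset.sum_add_distrib]
            _ ≤ (if u ∈ Ct then (∑ b, y u b) / 10 else 0) + ∑ w, (y w i.1 + y w u) / 10 := by
                refine add_le_add le_rfl ?_
                refine Finset.sum_le_sum_of_subset_of_nonneg (Finset.subset_univ _) fun w _ _ => ?_
                have h1 := hy w i.1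
                have h2 := hy w u
                positivity
            _ = _ := by
                rw [← Finset.sum_div, Finset.sum_add_distrib]
                simp only [hs i.1, hs u]
        · refine le_trans ?_ (sum_proposalProb y j.1).le
          refine Finset.sum_le_sum fun o _ => mul_le_of_le_one_right (hp _ _) ?_
          split_ifs <;> norm_num
        · have hji : j ≠ i := Finset.ne_of_mem_erase hj
          simp only [A, if_neg hji]
          convert one_sub_le_sum_proposalProb_not_touches (u := u) hy
            fun e : j.1 = i.1 => hji (Subtype.ext e)
    _ = ∑ X : {v // v ∈ Ct} → Option V, (∏ j, proposalProb y j.1 (X j)) *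
          ∑ u, (if ∀ j, A u j (X j) then 1 else 0) := by
        simp only [Finset.prod_univ_sum, Fintype.piFinset_univ, Finset.prod_mul_distrib,
          Finset.mul_sum]
        rw [Finset.sum_comm]
        refine Finset.sum_congr rfl fun X _ => Finset.sum_congr rfl fun u _ => ?_
        rw [Finset.prod_ite_zero]
        simp
    _ ≤ _ := by
        refine Finset.sum_le_sum fun X _ => mul_le_mul_of_nonneg_left ?_
          (Finset.prod_nonneg fun j _ => hp _ _)
        have hA : ∀ u, (∀ j, A u j (X j)) →
            X i = some u ∧ i ∈ isolatedProposers Ct X := fun u hu => by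
          have hi : X i = some u := by simpa [A] using hu i
          refine ⟨hi, mem_isolatedProposers.2 ⟨by simp [hi], fun j hj w hw hjw => ?_⟩⟩
          have h := hu j
          simp only [A, if_neg hj] at h
          obtain ⟨-, rfl | hw⟩ := hw
          · exact h.1 hjw
          · rw [hi, Option.some.injEq] at hw
            exact h.2 (hw ▸ hjw)
        rw [← Finset.sum_filter, Finset.sum_const, nsmul_one]
        split_ifs with h
        · exact_mod_cast Finset.card_le_one.2 fun a ha b hb => by
            rw [Finset.mem_filter] at ha hb
            exact Option.some.inj ((hA a ha.2).1.symm.trans (hA b hb.2).1)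
        · rw [Finset.filter_false_of_mem fun u _ hu => h (hA u hu).2]
          simp

theorem le_sum_prod_mul_card_isolated (hy : ∀ v u, 0 ≤ y v u) (hs : ∀ v u, y v u = y u v)
    (hy1 : ∀ v, ∑ u, y v u ≤ 1) [DecidableEq V] (hCt : ∀ v ∈ Ct, 1 / 2 ≤ ∑ u, y v u) :
    (Ct.card : ℝ) * (17 / 400) ≤
      ∑ X : {v // v ∈ Ct} → Option V, (∏ j, proposalProb y j.1 (X j)) *
        ((isolatedProposers Ct X).card : ℝ) := by
  let S : V → ℝ := fun v => ∑ u, y v u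
  let F : V → ℝ := fun v => ∑ u, y v u / 10 *
    (1 - ((if u ∈ Ct then S u / 10 else 0) + (S v + S u) / 10))
  have hF : ∑ v ∈ Ct, F v ≤ ∑ X : {v // v ∈ Ct} → Option V,
      (∏ j, proposalProb y j.1 (X j)) * ((isolatedProposers Ct X).card : ℝ) := by
    calc ∑ v ∈ Ct, F v = ∑ i : {v // v ∈ Ct}, F i.1 := (Finset.sum_coe_sort Ct F).symm
      _ ≤ ∑ i : {v // v ∈ Ct}, ∑ X : {v // v ∈ Ct} → Option V,
            (∏ j, proposalProb y j.1 (X j)) * (if i ∈ isolatedProposers Ct X then 1 else 0) :=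
          Finset.sum_le_sum fun i _ => mul_le_sum_prod_mul_isolated hy hs hy1 i
      _ = _ := by
          rw [Finset.sum_comm]
          refine Finset.sum_congr rfl fun X _ => ?_
          rw [← Finset.mul_sum, Finset.sum_boole, Finset.filter_univ_mem]
  refine le_trans ?_ hF
  have hsymm : ∑ v ∈ Ct, ∑ u, (if u ∈ Ct then y v u * (S v - S u) / 50 else 0) = 0 := by
    have h : ∀ v, ∑ u, (if u ∈ Ct then y v u * (S v - S u) / 50 else 0) =
        ∑ u ∈ Ct, y v u * (S v - S u) / 50 := fun v => by simp
    simp only [h]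
    have hc := Finset.sum_comm (s := Ct) (t := Ct) (f := fun v u => y v u * (S v - S u) / 50)
    have hn : ∑ u ∈ Ct, ∑ v ∈ Ct, y v u * (S v - S u) / 50 =
        -∑ u ∈ Ct, ∑ v ∈ Ct, y u v * (S u - S v) / 50 := by
      simp only [← Finset.sum_neg_distrib]
      refine Finset.sum_congr rfl fun u _ => Finset.sum_congr rfl fun v _ => ?_
      rw [hs v u]
      ring
    linarith
  calc (Ct.card : ℝ) * (17 / 400) = ∑ v ∈ Ct, (17 / 400 : ℝ) := by simp
    _ ≤ ∑ v ∈ Ct, S v / 10 * (1 - 3 / 10 * S v) := by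
        refine Finset.sum_le_sum fun v hv => ?_
        have h1 : S v ≤ 1 := hy1 v
        have h2 : 1 / 2 ≤ S v := hCt v hv
        nlinarith
    _ = ∑ v ∈ Ct, ∑ u, (y v u / 10 * (1 - 3 / 10 * S v) +
          (if u ∈ Ct then y v u * (S v - S u) / 50 else 0)) := by
        simp only [Finset.sum_add_distrib, hsymm, add_zero, ← Finset.sum_mul,
          ← Finset.sum_div, S]
    _ ≤ ∑ v ∈ Ct, F v := by
        refine Finset.sum_le_sum fun v hv => Finset.sum_le_sum fun u _ => ?_
        have h1 : S u ≤ 1 := hy1 u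
        have h2 : 1 / 2 ≤ S v := hCt v hv
        have h3 := hy v u
        split_ifs <;> nlinarith

end Expectation

theorem sum_incident_edges_eq [Fintype V] [DecidableEq V] (G : SimpleGraph V)
    [DecidableRel G.Adj] (x : Sym2 V → ℝ) (v : V) :
    ∑ e ∈ G.edgeFinset.filter (fun e => v ∈ e), x e =
      ∑ u, if G.Adj v u then x s(v, u) else 0 := by
  rw [← Finset.sum_filter]
  symm
  refine Finset.sum_nbij (fun u => s(v, u)) (fun u hu => ?_) (fun a _ b _ h => ?_) ?_
    fun _ _ => rfl
  · simpa using hu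
  · exact Sym2.congr_right.1 h
  · intro e he
    simp only [Finset.coe_filter, SimpleGraph.mem_edgeFinset, Set.mem_ofPred_eq] at he
    obtain ⟨he, u, rfl⟩ := he
    exact ⟨u, by simpa using he, rfl⟩

/-- In the randomized rounding process applied to a fractional matching `x`
of `G` and a set `C̃` of vertices each of fractional weight at least `1 - β` (`0 < β ≤ 1/2`),
with probability at least `1 - 2·exp(-|C̃|/5000)` the number of good edges satisfies
`f(X) ≥ |C̃|/50`; in particular, with this probability the process yields a matching of `G`
of size at least `|C̃|/50`. -/
theorem rounding_success_probability [Fintype V] [DecidableEq V] (G : SimpleGraph V)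
    [DecidableRel G.Adj] (x : Sym2 V → ℝ)
    (hx0 : ∀ e ∈ G.edgeFinset, 0 ≤ x e) (hx1 : ∀ e ∈ G.edgeFinset, x e ≤ 1)
    (hfm : ∀ v : V, ∑ e ∈ G.edgeFinset.filter (fun e => v ∈ e), x e ≤ 1)
    (β : ℝ) (hβ0 : 0 < β) (hβ1 : β ≤ 1 / 2)
    (Ct : Finset V)
    (hCt : ∀ v ∈ Ct, 1 - β ≤ ∑ e ∈ G.edgeFinset.filter (fun e => v ∈ e), x e) :
    1 - 2 * Real.exp (-(Ct.card : ℝ) / 5000) ≤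
      ∑ X ∈ Finset.univ.filter
          (fun X : {v // v ∈ Ct} → Option V => (Ct.card : ℝ) / 50 ≤ (goodCount Ct X : ℝ)),
        roundWeight G x Ct X := by
  let y : V → V → ℝ := fun v u => if G.Adj v u then x s(v, u) else 0
  have hy : ∀ v u, 0 ≤ y v u := fun v u => by
    simp only [y]
    split_ifs with h
    · exact hx0 _ (by simpa using h)
    · exact le_rfl
  have hs : ∀ v u, y v u = y u v := fun v u => by
    simp only [y, G.adj_comm v u, Sym2.eq_swap]
  have hsum : ∀ v, ∑ e ∈ G.edgeFinset.filter (fun e => v ∈ e), x e = ∑ u, y v u :=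
    sum_incident_edges_eq G x
  have hy1 : ∀ v, ∑ u, y v u ≤ 1 := fun v => hsum v ▸ hfm v
  have hC : ∀ v ∈ Ct, 1 / 2 ≤ ∑ u, y v u := fun v hv => by
    have := hCt v hv
    rw [hsum] at this
    linarith
  have hw : ∀ X : {v // v ∈ Ct} → Option V,
      roundWeight G x Ct X = ∏ i, proposalProb y i.1 (X i) := fun X => by
    refine Finset.prod_congr rfl fun i _ => ?_
    cases X i with
    | none => simp only [proposalProb, hsum]
    | some u =>
      simp only [proposalProb, y]
      split_ifs <;> simp
  simp only [hw]
  have hp := proposalProb_nonneg hy hy1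
  have hE := le_sum_prod_mul_card_isolated hy hs hy1 hC
  have htail := sum_filter_lt_prod_le (fun i : {v // v ∈ Ct} => proposalProb y i.1)
    (fun i => hp i.1) (fun i => sum_proposalProb y i.1)
    (fun X => ((isolatedProposers Ct X).card : ℝ)) 2
    (fun X Y i h => card_isolatedProposers_sub_le h) ((Ct.card : ℝ) / 50) (1 / 50) (by norm_num)
  have hbad : ∑ X with ¬ (Ct.card : ℝ) / 50 ≤ (goodCount Ct X : ℝ),
      ∏ i, proposalProb y i.1 (X i) ≤ Real.exp (-(Ct.card : ℝ) / 5000) := by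
    refine le_trans (Finset.sum_le_sum_of_subset_of_nonneg (fun X hX => ?_) fun X _ _ =>
      Finset.prod_nonneg fun i _ => hp _ _) (htail.trans (Real.exp_le_exp.2 ?_))
    · simp only [Finset.mem_filter, Finset.mem_univ, true_and, not_le] at hX ⊢
      exact lt_of_le_of_lt (by exact_mod_cast card_isolatedProposers_le_goodCount) hX
    · have hn : (0 : ℝ) ≤ Ct.card := Nat.cast_nonneg _
      rw [Fintype.card_coe]
      linarith
  have htot := Finset.sum_filter_add_sum_filter_not Finset.univ
    (fun X : {v // v ∈ Ct} → Option V => (Ct.card : ℝ) / 50 ≤ (goodCount Ct X : ℝ))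
    (fun X => ∏ i, proposalProb y i.1 (X i))
  rw [sum_prod_apply_eq_one (fun i : {v // v ∈ Ct} => proposalProb y i.1)
    fun i => sum_proposalProb y i.1] at htot
  have := Real.exp_pos (-(Ct.card : ℝ) / 5000)
  linarith
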